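/- Let x, y be real numbers with 1/2 < x < 1 and y > 0, suppose ζ(x+iy) = 0, and set a_k = (−1)^{k−1} k^{−x} cos(y·log k) and b_k = (−1)^{k−1} k^{−x} sin(y·log k) (with (−1)^0 = 1). For every positive integer k define f(k) = Σ_{q} (−1)^{ω(q)}, the sum ranging over all squarefree odd integers q > 1 dividing k, where ω(q) is the number of distinct prime factors of q. If the series Σ_{k=1}^∞ f(k)·a_k converges to 0 and the series Σ_{k=1}^∞ f(k)·b_k converges to 0, then Σ_{ℓ=0}^∞ a_{2^ℓ} = 0 and Σ_{ℓ=0}^∞ b_{2^ℓ} = 0; that is, 1 − Σ_{ℓ=1}^∞ 2^{−ℓx} cos(ℓ·y·log 2) = 0 and Σ_{ℓ=1}^∞ 2^{−ℓx} sin(ℓ·y·log 2) = 0. -/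

import Mathlib

/-!
Put `s = x + iy`. Then `a k - i * b k = (-1)^(k-1) k^(-s)`, so both `∑ a k` and `∑ b k` are read off
from the alternating series `∑ (-1)^(k-1) k^(-s)`. Grouped in pairs (`etaPair`) that series converges
normally on bounded subsets of `Re s > 1/2`. It equals `(1 - 2^(1-s)) ζ(s)` for `Re s > 1` by
rearrangement, and by the identity theorem also for `Re s > 1/2`, `Im s > 0` (`tsum_etaPair`). Since `ζ(s) = 0`,
the partial sums of `∑ a k` and `∑ b k` up to even indices tend to `0`.

On the other side, `f k` is the Möbius sum over the divisors `q > 1` of the odd part of `k`, hence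
`0` if `k` is a power of `2` and `-1` otherwise (`sum_odd_squarefree`). Thus `(1 + f k) * a k` is
`a k` on powers of `2` and `0` elsewhere, and adding the two null series along the indices
`n = 2 ^ L` shows that the partial sums of `∑ a (2 ^ l)` tend to `0`; likewise for `b`.
-/

open Filter Finset

/-! ### The alternating zeta series -/

/-- The sum of two consecutive terms of the alternating (Dirichlet eta) series
`∑ (-1)^k (k+1)^(-s)`. -/
noncomputable def etaPair (n : ℕ) (s : ℂ) : ℂ :=
  ((2 * n + 1 : ℕ) : ℂ) ^ (-s) - ((2 * n + 2 : ℕ) : ℂ) ^ (-s)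

/-- The mean value inequality for `t ↦ t ^ (-s)` on `[m, m + 1]`. -/
lemma norm_cpow_sub_le (m : ℕ) (hm : 0 < m) (s : ℂ) (hs : 0 < s.re) :
    ‖((m + 1 : ℕ) : ℂ) ^ (-s) - (m : ℂ) ^ (-s)‖ ≤ ‖s‖ * (m : ℝ) ^ (-s.re - 1) := by
  have hm' : (0 : ℝ) < m := by exact_mod_cast hm
  have hs0 : -s ≠ 0 := by
    rw [neg_ne_zero]; rintro rfl; simp at hs
  have key := (convex_Icc (m : ℝ) (m + 1)).norm_image_sub_le_of_norm_hasDerivWithin_le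
    (f := fun t : ℝ => (t : ℂ) ^ (-s)) (f' := fun t : ℝ => (-s) * (t : ℂ) ^ (-s - 1))
    (C := ‖s‖ * (m : ℝ) ^ (-s.re - 1)) (x := m) (y := m + 1)
    (fun t ht => (hasDerivAt_ofReal_cpow_const (by linarith [ht.1]) hs0).hasDerivWithinAt)
    (fun t ht => by
      have ht0 : 0 < t := by linarith [ht.1]
      rw [norm_mul, norm_neg, Complex.norm_cpow_eq_rpow_re_of_pos ht0]
      simp only [Complex.sub_re, Complex.neg_re, Complex.one_re]
      gcongr ?_ * ?_
      exact Real.rpow_le_rpow_of_nonpos hm' ht.1 (by linarith))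
    ⟨le_rfl, by linarith⟩ ⟨by linarith, le_rfl⟩
  simpa using key

lemma norm_etaPair_le (n : ℕ) (s : ℂ) (hs : 1 / 2 < s.re) :
    ‖etaPair n s‖ ≤ ‖s‖ * ((n + 1 : ℕ) : ℝ) ^ (-(3 / 2) : ℝ) := by
  have h := norm_cpow_sub_le (2 * n + 1) (by omega) s (by linarith)
  rw [etaPair, norm_sub_rev]
  refine h.trans ?_
  gcongr ?_ * ?_
  have h1 : (1 : ℝ) ≤ ((2 * n + 1 : ℕ) : ℝ) := by exact_mod_cast Nat.le_add_left 1 _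
  refine (Real.rpow_le_rpow_of_exponent_le h1 (by linarith : -s.re - 1 ≤ -(3 / 2))).trans ?_
  refine Real.rpow_le_rpow_of_nonpos (by positivity) ?_ (by norm_num)
  exact_mod_cast (by omega : n + 1 ≤ 2 * n + 1)

lemma summable_majorant (R : ℝ) :
    Summable fun n : ℕ => R * ((n + 1 : ℕ) : ℝ) ^ (-(3 / 2) : ℝ) := by
  refine Summable.mul_left _ ?_
  exact (summable_nat_add_iff (f := fun n : ℕ => (n : ℝ) ^ (-(3 / 2) : ℝ)) 1).2
    (Real.summable_nat_rpow.2 (by norm_num))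

lemma summable_etaPair (s : ℂ) (hs : 1 / 2 < s.re) : Summable fun n => etaPair n s :=
  Summable.of_norm_bounded (summable_majorant ‖s‖) fun n => norm_etaPair_le n s hs

/-- In the half-plane of absolute convergence the eta series may be rearranged: it is the zeta
series minus twice its even-indexed part. -/
lemma tsum_etaPair_of_one_lt (s : ℂ) (hs : 1 < s.re) :
    ∑' n, etaPair n s = (1 - 2 * 2 ^ (-s)) * riemannZeta s := by
  set h : ℕ → ℂ := fun n => ((n + 1 : ℕ) : ℂ) ^ (-s) with hh
  have hz : riemannZeta s = ∑' n, h n := by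
    rw [zeta_eq_tsum_one_div_nat_add_one_cpow hs]
    simp [hh, Complex.cpow_neg]
  have hsum : Summable h := by
    have := (summable_nat_add_iff 1).2 (Complex.summable_one_div_nat_cpow.2 hs)
    simpa [hh, Complex.cpow_neg] using this
  have he : Summable fun n => h (2 * n) :=
    hsum.comp_injective (i := fun n => 2 * n) fun a b hab => by simpa using hab
  have ho' : ∀ n, h (2 * n + 1) = 2 ^ (-s) * h n := fun n => by
    simp only [hh]
    rw [show 2 * n + 1 + 1 = 2 * (n + 1) by ring, Nat.cast_mul, Complex.natCast_mul_natCast_cpow]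
    norm_cast
  have ho : Summable fun n => h (2 * n + 1) :=
    hsum.comp_injective (i := fun n => 2 * n + 1) fun a b hab => by simpa using hab
  have h1 := tsum_even_add_odd he ho
  have h2 : ∑' n, h (2 * n + 1) = 2 ^ (-s) * ∑' n, h n := by
    simp_rw [ho']; exact tsum_mul_left
  have h3 : ∑' n, etaPair n s = ∑' n, h (2 * n) - ∑' n, h (2 * n + 1) := by
    rw [← he.tsum_sub ho]; rfl
  rw [h3, hz]
  linear_combination h1 - 2 * h2

/-- Analytic continuation of the eta identity from `Re s > 1`. Restricting to the upper half-plane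
and to a ball keeps the domain convex, away from the pole of `ζ`, and the paired series normally
convergent. -/
lemma tsum_etaPair (s : ℂ) (hs : 1 / 2 < s.re) (hs' : 0 < s.im) :
    ∑' n, etaPair n s = (1 - 2 * 2 ^ (-s)) * riemannZeta s := by
  set R : ℝ := ‖s‖ + 10
  set U : Set ℂ := ({z | 1 / 2 < z.re} ∩ {z | 0 < z.im}) ∩ Metric.ball 0 R with hU
  have hUo : IsOpen U := ((isOpen_lt continuous_const Complex.continuous_re).inter
    (isOpen_lt continuous_const Complex.continuous_im)).inter Metric.isOpen_ball
  have hUc : Convex ℝ U := ((convex_halfSpace_re_gt _).inter (convex_halfSpace_im_gt _)).inter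
    (convex_ball _ _)
  have hsU : s ∈ U := ⟨⟨hs, hs'⟩, by simp [R]⟩
  have h0U : (2 + Complex.I) ∈ U := by
    refine ⟨⟨by norm_num, by norm_num⟩, ?_⟩
    rw [mem_ball_zero_iff]
    have : ‖(2 + Complex.I : ℂ)‖ ≤ 2 + 1 := (norm_add_le _ _).trans (by simp)
    have := norm_nonneg s
    simp only [R]; linarith
  have hd1 : DifferentiableOn ℂ (fun z => ∑' n, etaPair n z) U := by
    refine Complex.differentiableOn_tsum_of_summable_norm (summable_majorant R) (fun n => ?_) hUo
      fun n z hz => ?_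
    · unfold etaPair
      refine Differentiable.differentiableOn fun z => ?_
      refine DifferentiableAt.sub ?_ ?_ <;>
      · refine DifferentiableAt.const_cpow (by fun_prop) (Or.inl ?_)
        exact Nat.cast_ne_zero.2 (by omega)
    · refine (norm_etaPair_le n z hz.1.1).trans ?_
      gcongr
      simpa using (mem_ball_zero_iff.1 hz.2).le
  have hd2 : DifferentiableOn ℂ (fun z => (1 - 2 * 2 ^ (-z)) * riemannZeta z) U := fun z hz => by
    refine DifferentiableAt.differentiableWithinAt (DifferentiableAt.mul ?_ ?_)
    · refine (DifferentiableAt.const_cpow (by fun_prop) (Or.inl two_ne_zero)).const_mul _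
        |>.const_sub _
    · refine differentiableAt_riemannZeta ?_
      rintro rfl
      simpa using hz.1.2
  refine (hd1.analyticOnNhd hUo).eqOn_of_preconnected_of_eventuallyEq (hd2.analyticOnNhd hUo)
    hUc.isPreconnected h0U ?_ hsU
  filter_upwards [(isOpen_lt continuous_const Complex.continuous_re).mem_nhds
    (show (1 : ℝ) < (2 + Complex.I).re by norm_num)] with z hz
  exact tsum_etaPair_of_one_lt z hz

/-! ### The weight `f` and the powers of `2` -/

open Classical in
/-- The Möbius sum over the divisors `q > 1` of the odd part `m` of `k` is `[m = 1] - 1`. -/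
lemma sum_odd_squarefree (k : ℕ) (hk : 0 < k) :
    ∑ q ∈ k.divisors.filter (fun q => Squarefree q ∧ Odd q ∧ 1 < q),
        (-1 : ℝ) ^ q.primeFactors.card = if ∃ l, k = 2 ^ l then 0 else -1 := by
  obtain ⟨j, m, hm, rfl⟩ := Nat.exists_eq_two_pow_mul_odd hk.ne'
  have hm0 : m ≠ 0 := by rintro rfl; simp at hm
  have hset : (2 ^ j * m).divisors.filter (fun q => Squarefree q ∧ Odd q ∧ 1 < q)
      = (m.divisors.erase 1).filter Squarefree := by
    ext q
    simp only [mem_filter, Nat.mem_divisors, mem_erase]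
    constructor
    · rintro ⟨⟨hd, -⟩, hs, ho, h1⟩
      have : Nat.Coprime q (2 ^ j) := (Nat.coprime_two_right.2 ho).pow_right j
      exact ⟨⟨by omega, this.dvd_of_dvd_mul_left hd, hm0⟩, hs⟩
    · rintro ⟨⟨h1, hd, -⟩, hs⟩
      have := Nat.pos_of_dvd_of_pos hd (by omega)
      exact ⟨⟨hd.mul_left _, hk.ne'⟩, hs, hm.of_dvd_nat hd, by omega⟩
  have hterm : ∀ q ∈ m.divisors.erase 1, (if Squarefree q then (-1 : ℝ) ^ q.primeFactors.card
      else 0) = ((ArithmeticFunction.moebius q : ℤ) : ℝ) := fun q _ => by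
    split_ifs with hs
    · rw [ArithmeticFunction.moebius_apply_of_squarefree hs,
        ← (ArithmeticFunction.cardDistinctFactors_eq_cardFactors_iff_squarefree
          hs.ne_zero).2 hs]
      simp [ArithmeticFunction.cardDistinctFactors_apply, ← List.card_toFinset]
    · simp [ArithmeticFunction.moebius_eq_zero_of_not_squarefree hs]
  have htot : ∑ q ∈ m.divisors, ((ArithmeticFunction.moebius q : ℤ) : ℝ)
      = if m = 1 then 1 else 0 := by
    have := congrArg (fun F : ArithmeticFunction ℤ => F m) ArithmeticFunction.coe_zeta_mul_moebius
    simp only [ArithmeticFunction.coe_zeta_mul_apply, ArithmeticFunction.one_apply] at this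
    exact_mod_cast this
  have hiff : (∃ l, 2 ^ j * m = 2 ^ l) ↔ m = 1 := by
    constructor
    · rintro ⟨l, hl⟩
      obtain ⟨i, -, rfl⟩ := (Nat.dvd_prime_pow Nat.prime_two).1 (Dvd.intro_left _ hl)
      rcases Nat.eq_zero_or_pos i with rfl | hi
      · simp
      · exact absurd hm (by simp [Nat.even_pow, hi.ne'])
    · rintro rfl; exact ⟨j, by simp⟩
  rw [hset, sum_filter, sum_congr rfl hterm]
  have h1 := Finset.add_sum_erase m.divisors
    (fun q => ((ArithmeticFunction.moebius q : ℤ) : ℝ)) (Nat.one_mem_divisors.2 hm0)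
  rw [htot] at h1
  simp only [hiff, ArithmeticFunction.moebius_apply_one] at h1 ⊢
  split_ifs at h1 ⊢ <;> push_cast at h1 <;> linarith

open Classical in
/-- If `f = -1` off the powers of `2` and `f = 0` on them, then `1 + f` is the indicator of the
powers of `2`. -/
lemma sum_two_pow (f c : ℕ → ℝ)
    (hf : ∀ k : ℕ, 0 < k → f k = if ∃ l, k = 2 ^ l then 0 else -1) (L : ℕ) :
    ∑ l ∈ range (L + 1), c (2 ^ l)
      = ∑ k ∈ Icc 1 (2 ^ L), c k + ∑ k ∈ Icc 1 (2 ^ L), f k * c k := by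
  rw [← sum_add_distrib,
    ← sum_image (s := range (L + 1)) (g := fun l => 2 ^ l) (f := c)
      (Nat.pow_right_injective le_rfl).injOn]
  have hsub : (range (L + 1)).image (fun l => 2 ^ l) ⊆ Icc 1 (2 ^ L) := by
    intro k hk
    obtain ⟨l, hl, rfl⟩ := mem_image.1 hk
    exact mem_Icc.2 ⟨Nat.one_le_two_pow,
      Nat.pow_le_pow_right two_pos (Nat.lt_succ_iff.1 (mem_range.1 hl))⟩
  rw [← sum_subset hsub]
  · refine sum_congr rfl fun k hk => ?_
    obtain ⟨l, hl, rfl⟩ := mem_image.1 hk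
    rw [hf _ (by positivity), if_pos ⟨l, rfl⟩]; ring
  · intro k hk hk'
    have hk1 := mem_Icc.1 hk
    rw [hf k hk1.1, if_neg]
    · ring
    · rintro ⟨l, rfl⟩
      refine hk' (mem_image.2 ⟨l, mem_range.2 ?_, rfl⟩)
      exact Nat.lt_succ_of_le ((Nat.pow_le_pow_iff_right (by norm_num)).1 hk1.2)

open Classical in
/-- The sum over powers of `2` vanishes when `∑ c k` sums to `0` along even indices and the
`f`-weighted series sums to `0`: even indices suffice because only the partial sums up to
`2 ^ (L + 1)` are needed. -/
lemma tsum_two_pow_eq_zero (f c : ℕ → ℝ)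
    (hf : ∀ k : ℕ, 0 < k → f k = if ∃ l, k = 2 ^ l then 0 else -1)
    (hc : Tendsto (fun N : ℕ => ∑ k ∈ Icc 1 (2 * N), c k) atTop (nhds 0))
    (hfc : Tendsto (fun n : ℕ => ∑ k ∈ Icc 1 n, f k * c k) atTop (nhds 0))
    (hs : Summable fun l : ℕ => c (2 ^ l)) : ∑' l : ℕ, c (2 ^ l) = 0 := by
  have hpow : Tendsto (fun L : ℕ => 2 ^ L) atTop atTop :=
    tendsto_pow_atTop_atTop_of_one_lt (by norm_num : (1 : ℕ) < 2)
  have h1 : Tendsto (fun L : ℕ => ∑ k ∈ Icc 1 (2 ^ (L + 1)), c k) atTop (nhds 0) := by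
    simp only [pow_succ']
    exact hc.comp hpow
  have h2 := hfc.comp (hpow.comp (tendsto_add_atTop_nat 1))
  have h3 := h1.add h2
  rw [add_zero] at h3
  refine tendsto_nhds_unique (hs.hasSum.tendsto_sum_nat.comp (tendsto_add_atTop_nat 2)) ?_
  refine h3.congr fun L => ?_
  exact (sum_two_pow f c hf (L + 1)).symm

/-! ### Real and imaginary parts -/

lemma sum_Icc_two_mul (c : ℕ → ℝ) (d : ℕ → ℝ)
    (h : ∀ k, 0 < k → c k = (-1 : ℝ) ^ (k - 1) * d k) (N : ℕ) :
    ∑ k ∈ Icc 1 (2 * N), c k = ∑ n ∈ range N, (d (2 * n + 1) - d (2 * n + 2)) := by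
  induction N with
  | zero => simp
  | succ N ih =>
    rw [sum_range_succ, ← ih, show 2 * (N + 1) = 2 * N + 1 + 1 by ring,
      sum_Icc_succ_top (by omega), sum_Icc_succ_top (by omega),
      h (2 * N + 1) (by omega), h (2 * N + 1 + 1) (by omega)]
    simp [pow_succ, pow_mul]
    ring

lemma natCast_cpow_neg (x y : ℝ) (k : ℕ) (hk : 0 < k) :
    (k : ℂ) ^ (-((x : ℂ) + (y : ℂ) * Complex.I))
      = (((k : ℝ) ^ (-x) * Real.cos (y * Real.log k) : ℝ) : ℂ)
        - (((k : ℝ) ^ (-x) * Real.sin (y * Real.log k) : ℝ) : ℂ) * Complex.I := by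
  have hk' : (0 : ℝ) < k := by exact_mod_cast hk
  have hk0 : (k : ℂ) ≠ 0 := by exact_mod_cast hk.ne'
  have he : (-((y * Real.log k : ℝ) : ℂ)) * Complex.I
      = Complex.log k * (-((y : ℂ) * Complex.I)) := by
    rw [← Complex.ofReal_natCast, ← Complex.ofReal_log hk'.le]; push_cast; ring
  rw [neg_add, Complex.cpow_add _ _ hk0, Complex.cpow_def_of_ne_zero hk0 (-((y : ℂ) * Complex.I)),
    ← he, Complex.exp_mul_I, Complex.cos_neg, Complex.sin_neg]
  push_cast [Complex.ofReal_cpow hk'.le]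
  ring

/-- The terms of index `2 ^ l` with `l > 0`, written for `g = cos` and `g = sin` at once. -/
lemma two_pow_term (x y : ℝ) (l : ℕ) (g : ℝ → ℝ) (hl : 0 < l) :
    (-1 : ℝ) ^ (2 ^ l - 1) * ((2 ^ l : ℕ) : ℝ) ^ (-x) * g (y * Real.log (2 ^ l : ℕ))
      = -((2 : ℝ) ^ (-(l : ℝ) * x) * g (l * y * Real.log 2)) := by
  have hodd : Odd (2 ^ l - 1) :=
    Nat.Even.sub_odd Nat.one_le_two_pow ((Nat.even_pow.2 ⟨even_two, hl.ne'⟩)) odd_one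
  rw [hodd.neg_one_pow]
  push_cast
  rw [← Real.rpow_natCast_mul (by norm_num), Real.log_pow]
  rw [show y * (l * Real.log 2) = l * y * Real.log 2 by ring,
    show (l : ℝ) * -x = -(l : ℝ) * x by ring]
  ring

lemma summable_two_pow (x y : ℝ) (hx : 0 < x) (g : ℝ → ℝ) (hg : ∀ t, |g t| ≤ 1) :
    Summable fun l : ℕ =>
      (2 : ℝ) ^ (-((l + 1 : ℕ) : ℝ) * x) * g ((l + 1 : ℕ) * y * Real.log 2) := by
  have hr : (2 : ℝ) ^ (-x) < 1 := Real.rpow_lt_one_of_one_lt_of_neg (by norm_num) (by linarith)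
  refine Summable.of_norm_bounded
    ((summable_nat_add_iff 1).2 (summable_geometric_of_lt_one (by positivity) hr)) fun l => ?_
  rw [norm_mul, Real.norm_of_nonneg (by positivity), ← Real.rpow_mul_natCast (by norm_num),
    show -((l + 1 : ℕ) : ℝ) * x = -x * (l + 1 : ℕ) by ring]
  exact mul_le_of_le_one_right (by positivity) (hg _)

theorem stmt_11
    (x y : ℝ) (hx : 1 / 2 < x) (hx1 : x < 1) (hy : 0 < y)
    (hz : riemannZeta ((x : ℂ) + (y : ℂ) * Complex.I) = 0)
    (a b : ℕ → ℝ)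
    (ha : ∀ k : ℕ, 0 < k → a k = (-1 : ℝ) ^ (k - 1) * (k : ℝ) ^ (-x) * Real.cos (y * Real.log k))
    (hb : ∀ k : ℕ, 0 < k → b k = (-1 : ℝ) ^ (k - 1) * (k : ℝ) ^ (-x) * Real.sin (y * Real.log k))
    (f : ℕ → ℝ)
    (hf : ∀ k : ℕ, 0 < k →
      f k = ∑ q ∈ k.divisors.filter (fun q => Squarefree q ∧ Odd q ∧ 1 < q),
        (-1 : ℝ) ^ q.primeFactors.card)
    (hfa : Tendsto (fun n : ℕ => ∑ k ∈ Finset.Icc 1 n, f k * a k) atTop (nhds 0))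
    (hfb : Tendsto (fun n : ℕ => ∑ k ∈ Finset.Icc 1 n, f k * b k) atTop (nhds 0)) :
    (∑' ℓ : ℕ, a (2 ^ ℓ)) = 0 ∧ (∑' ℓ : ℕ, b (2 ^ ℓ)) = 0 ∧
    1 - (∑' ℓ : ℕ, (2 : ℝ) ^ (-((ℓ + 1 : ℕ) : ℝ) * x)
          * Real.cos ((ℓ + 1 : ℕ) * y * Real.log 2)) = 0 ∧
    (∑' ℓ : ℕ, (2 : ℝ) ^ (-((ℓ + 1 : ℕ) : ℝ) * x)
          * Real.sin ((ℓ + 1 : ℕ) * y * Real.log 2)) = 0 := by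
  classical
  have hf' : ∀ k : ℕ, 0 < k → f k = if ∃ l, k = 2 ^ l then 0 else -1 := fun k hk => by
    rw [hf k hk, sum_odd_squarefree k hk]
  set s : ℂ := (x : ℂ) + (y : ℂ) * Complex.I with hs
  have hsre : s.re = x := by simp [hs]
  have hsim : s.im = y := by simp [hs]
  have heta : Tendsto (fun N : ℕ => ∑ n ∈ range N, etaPair n s) atTop (nhds 0) := by
    have h := (summable_etaPair s (hsre ▸ hx)).hasSum.tendsto_sum_nat
    rwa [tsum_etaPair s (hsre ▸ hx) (hsim ▸ hy), hz, mul_zero] at h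
  have hca : Tendsto (fun N : ℕ => ∑ k ∈ Icc 1 (2 * N), a k) atTop (nhds 0) := by
    have h := (Complex.continuous_re.tendsto 0).comp heta
    rw [Complex.zero_re] at h
    refine h.congr fun N => ?_
    rw [sum_Icc_two_mul a (fun k => (k : ℝ) ^ (-x) * Real.cos (y * Real.log k))
      fun k hk => by rw [ha k hk, mul_assoc]]
    simp only [Function.comp, Complex.re_sum]
    refine sum_congr rfl fun n _ => ?_
    rw [etaPair, hs, natCast_cpow_neg x y _ (by omega), natCast_cpow_neg x y _ (by omega)]
    simp only [Complex.sub_re, Complex.ofReal_re, Complex.re_ofReal_mul, Complex.I_re, mul_zero,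
      sub_zero]
  have hcb : Tendsto (fun N : ℕ => ∑ k ∈ Icc 1 (2 * N), b k) atTop (nhds 0) := by
    have h := ((Complex.continuous_im.tendsto 0).comp heta).neg
    rw [Complex.zero_im, neg_zero] at h
    refine h.congr fun N => ?_
    rw [sum_Icc_two_mul b (fun k => (k : ℝ) ^ (-x) * Real.sin (y * Real.log k))
      fun k hk => by rw [hb k hk, mul_assoc]]
    simp only [Function.comp, Complex.im_sum, ← sum_neg_distrib]
    refine sum_congr rfl fun n _ => ?_
    rw [etaPair, hs, natCast_cpow_neg x y _ (by omega), natCast_cpow_neg x y _ (by omega)]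
    simp only [Complex.sub_im, Complex.ofReal_im, Complex.im_ofReal_mul, Complex.I_im, mul_one]
    ring
  have hta : ∀ l : ℕ, a (2 ^ (l + 1)) = -((2 : ℝ) ^ (-((l + 1 : ℕ) : ℝ) * x)
      * Real.cos ((l + 1 : ℕ) * y * Real.log 2)) := fun l => by
    rw [ha _ (by positivity), two_pow_term x y (l + 1) Real.cos (by omega)]
  have htb : ∀ l : ℕ, b (2 ^ (l + 1)) = -((2 : ℝ) ^ (-((l + 1 : ℕ) : ℝ) * x)
      * Real.sin ((l + 1 : ℕ) * y * Real.log 2)) := fun l => by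
    rw [hb _ (by positivity), two_pow_term x y (l + 1) Real.sin (by omega)]
  have hsa : Summable fun l : ℕ => a (2 ^ l) := by
    rw [← summable_nat_add_iff 1]
    simp only [hta]
    exact (summable_two_pow x y (by linarith) Real.cos Real.abs_cos_le_one).neg
  have hsb : Summable fun l : ℕ => b (2 ^ l) := by
    rw [← summable_nat_add_iff 1]
    simp only [htb]
    exact (summable_two_pow x y (by linarith) Real.sin Real.abs_sin_le_one).neg
  have hA := tsum_two_pow_eq_zero f a hf' hca hfa hsa
  have hB := tsum_two_pow_eq_zero f b hf' hcb hfb hsb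
  have hA' := hsa.tsum_eq_zero_add
  have hB' := hsb.tsum_eq_zero_add
  simp only [hta, tsum_neg, hA] at hA'
  simp only [htb, tsum_neg, hB] at hB'
  have ha1 : a (2 ^ 0) = 1 := by rw [pow_zero, ha 1 one_pos]; simp
  have hb1 : b (2 ^ 0) = 0 := by rw [pow_zero, hb 1 one_pos]; simp
  exact ⟨hA, hB, by linarith, by linarith⟩
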